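/- Let k > 0, let x₁ ∈ ℝ², r₁ > 0, μ₁ > 0, μ₀ > 0, and let d ∈ ℝ² be a unit vector. Define ψ_∞ : S¹ → ℂ by ψ_∞(θ) = −(k²(1+i)/(4√(kπ))) r₁² π (2μ₀/(μ₁+μ₀)) (d·θ) exp(i k d·x₁) exp(−i k θ·x₁).ied Then the indicator integral evaluated at the true location x₁ vanishes: ∫₀^{2π} ψ_∞(θ(t)) exp(i k θ(t)·x₁) dt = 0, where θ(t) = (cos t, sin t). -/

import Mathlib

/-!
At the true location `x₁` the far-field phase `exp(-i k θ·x₁)` cancels against the test factor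
`exp(i k θ·x₁)`, so the integrand is a constant times `d·θ(t) = d₁ cos t + d₂ sin t`, which
integrates to zero over a full period.
-/

open Real intervalIntegral

/-- Euclidean inner product on ℝ². -/
noncomputable def dot2 (a b : ℝ × ℝ) : ℝ := a.1 * b.1 + a.2 * b.2

/-- Euclidean norm on ℝ². -/
noncomputable def norm2 (a : ℝ × ℝ) : ℝ := Real.sqrt (a.1 ^ 2 + a.2 ^ 2)

/-- Parametrization of the unit circle. -/
noncomputable def circ (t : ℝ) : ℝ × ℝ := (Real.cos t, Real.sin t)

theorem stmt_10 (k : ℝ) (hk : 0 < k) (x₁ : ℝ × ℝ) (r₁ μ₁ μ₀ : ℝ)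
    (hr₁ : 0 < r₁) (hμ₁ : 0 < μ₁) (hμ₀ : 0 < μ₀)
    (d : ℝ × ℝ) (hd : norm2 d = 1) (ψ : ℝ × ℝ → ℂ)
    (hψ : ∀ θ : ℝ × ℝ, ψ θ =
      -(((k : ℂ) ^ 2 * (1 + Complex.I)) / (4 * (Real.sqrt (k * Real.pi) : ℂ))) *
        ((r₁ ^ 2 * Real.pi * (2 * μ₀ / (μ₁ + μ₀)) * dot2 d θ : ℝ) : ℂ) *
        Complex.exp (Complex.I * (k : ℂ) * ((dot2 d x₁ : ℝ) : ℂ)) *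
        Complex.exp (-Complex.I * (k : ℂ) * ((dot2 θ x₁ : ℝ) : ℂ))) :
    ∫ t in (0:ℝ)..(2 * Real.pi),
        ψ (circ t) * Complex.exp (Complex.I * (k : ℂ) * ((dot2 (circ t) x₁ : ℝ) : ℂ)) = 0 := by
  -- At `x₁` the two `θ`-dependent phases cancel, leaving a constant multiple of `d·θ(t)`.
  have phases_cancel : ∀ t : ℝ,
      ψ (circ t) * Complex.exp (Complex.I * (k : ℂ) * ((dot2 (circ t) x₁ : ℝ) : ℂ)) =
        (-(((k : ℂ) ^ 2 * (1 + Complex.I)) / (4 * (Real.sqrt (k * Real.pi) : ℂ))) *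
          ((r₁ ^ 2 * Real.pi * (2 * μ₀ / (μ₁ + μ₀)) : ℝ) : ℂ) *
          Complex.exp (Complex.I * (k : ℂ) * ((dot2 d x₁ : ℝ) : ℂ))) *
          ((dot2 d (circ t) : ℝ) : ℂ) := by
    intro t
    have hexp : Complex.exp (-Complex.I * (k : ℂ) * ((dot2 (circ t) x₁ : ℝ) : ℂ)) *
        Complex.exp (Complex.I * (k : ℂ) * ((dot2 (circ t) x₁ : ℝ) : ℂ)) = 1 := by
      rw [← Complex.exp_add, ← Complex.exp_zero]
      congr 1
      ring
    rw [hψ, mul_assoc, hexp, mul_one, Complex.ofReal_mul _ (dot2 d (circ t))]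
    ring
  have mean_zero : ∫ t in (0:ℝ)..(2 * Real.pi), dot2 d (circ t) = 0 := by
    simp only [dot2, circ]
    rw [intervalIntegral.integral_add
      ((Real.continuous_cos.const_mul d.1).intervalIntegrable _ _)
      ((Real.continuous_sin.const_mul d.2).intervalIntegrable _ _)]
    simp
  simp_rw [phases_cancel]
  rw [intervalIntegral.integral_const_mul, intervalIntegral.integral_ofReal, mean_zero]
  simp
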